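/- arXiv:1302.4151 — 2 statements merged into one kernel-verified Lean document; each statement's English description precedes it below -/
import Mathlib

section
/- Let φ : (R,m) → (S,n) be a flat local homomorphism of commutative Noetherian local rings such that the induced map R/m → S/mS is an isomorphism, and let M and N be finitely generated R-modules. If for every prime ideal p ∈ Supp_R(M) ∩ Supp_R(N) the induced ring map R/p → S/pS is an isomorphism, then for every i ≥ 0 the R-module Ext^i_R(M,N) has an S-module structure compatible with its R-module structure via φ. -/
/-!
Multiplication by `r` on `Ext^i_R(M, N)` is induced both by `r` on `M` and by `r` on `N`, so the
module is killed by `I = ann M + ann N`, and it suffices that `R/I → S/IS` is an isomorphism: then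
`S` acts through `S → S/IS ≅ R/I`. The primes containing `I` are those of `Supp M ∩ Supp N`.
Since `S` is flat, the finite modules `L` for which `L → S ⊗ L` is an isomorphism are closed under
extensions, so a prime filtration of `R/I` reduces the claim to the quotients `R/p`.
-/

universe u

open CategoryTheory TensorProduct

/-- An `R`-module `L` has an `S`-module structure compatible with its `R`-module structure
via `algebraMap R S` if there is an `S`-scalar multiplication making `L` an `S`-module
such that `algebraMap R S r • x = r • x` for all `r : R`, `x : L`. -/
def HasCompatibleSModule (R S L : Type*) [CommRing R] [CommRing S] [Algebra R S]
    [AddCommGroup L] [Module R L] : Prop :=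
  ∃ inst : Module S L, ∀ (r : R) (x : L), (letI := inst; (algebraMap R S r) • x) = r • x

/-- `Ext^i_R(M, N)` as an object of `ModuleCat R`. -/
noncomputable def extModule (R : Type u) [CommRing R] (M N : Type u) [AddCommGroup M]
    [Module R M] [AddCommGroup N] [Module R N] (i : ℕ) : ModuleCat.{u} R :=
  ((Ext R (ModuleCat.{u} R) i).obj (Opposite.op (ModuleCat.of R M))).obj (ModuleCat.of R N)

section NullHomotopicSMul

open HomologicalComplex

variable {R : Type*} [Semiring R] {C : Type*} [Category* C]

lemma homologyMap_smul [Preadditive C] [Linear R C] {ι : Type*} {c : ComplexShape ι}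
    {K L : HomologicalComplex C c} (r : R) (f : K ⟶ L) (i : ι) [K.HasHomology i]
    [L.HasHomology i] : homologyMap (r • f) i = r • homologyMap f i :=
  ShortComplex.homologyMap_smul ((shortComplexFunctor C c i).map f) r

lemma smul_id_homology_eq_zero [Preadditive C] [Linear R C] {ι : Type*} {c : ComplexShape ι}
    {K : HomologicalComplex C c} {r : R} (h : Homotopy (r • 𝟙 K) 0) (i : ι) [K.HasHomology i] :
    r • 𝟙 (K.homology i) = 0 := by
  simpa only [homologyMap_smul, homologyMap_id, homologyMap_zero] using h.homologyMap_eq i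

/-- If `r` annihilates `X`, then multiplication by `r` on a projective resolution of `X` lifts the
zero map of `X`, and this is the resulting null-homotopy. -/
noncomputable def projectiveResolutionHomotopyZero [Abelian C] [Linear R C] {X : C}
    (P : ProjectiveResolution X) {r : R} (hr : r • 𝟙 X = 0) : Homotopy (r • 𝟙 P.complex) 0 :=
  ProjectiveResolution.liftHomotopyZero _ <|
    calc (r • 𝟙 P.complex) ≫ P.π = P.π ≫ (ChainComplex.single₀ C).map (r • 𝟙 X) := by
          apply to_single_hom_ext
          let π₀ : P.complex.X 0 ⟶ X := P.π.f 0
          suffices (r • 𝟙 _) ≫ π₀ = π₀ ≫ (r • 𝟙 X) by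
            simpa only [comp_f, ChainComplex.single₀_map_f_zero]
          rw [Linear.smul_comp, Linear.comp_smul, Category.id_comp, Category.comp_id]
      _ = 0 := by rw [hr, Functor.map_zero, Limits.comp_zero]

end NullHomotopicSMul

section ExtAnnihilator

variable {R : Type*} [CommRing R] {C : Type*} [Category* C] [Abelian C] [Linear R C]

/-- The null-homotopy of `r` on the cochain complex `Hom(K, Y)` induced by a null-homotopy of `r`
on `K`. -/
noncomputable def linearYonedaObjHomotopyZero {α : Type*} [AddRightCancelSemigroup α] [One α]
    {K : ChainComplex C α} {r : R} (h : Homotopy (r • 𝟙 K) 0) (Y : C) :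
    Homotopy (r • 𝟙 (K.linearYonedaObj R Y)) 0 :=
  (Homotopy.ofEq (by
      ext j (f : K.X j ⟶ Y)
      change r • f = (r • 𝟙 _) ≫ f
      rw [Linear.smul_comp, Category.id_comp])).trans <|
    (((linearYoneda R C).obj Y).rightOp.mapHomotopy h).unop.trans <|
      Homotopy.ofEq (by
        ext j (f : K.X j ⟶ Y)
        exact Limits.zero_comp)

lemma smul_id_linearYonedaObj_eq_zero {α : Type*} [AddRightCancelSemigroup α] [One α]
    (K : ChainComplex C α) {Y : C} {r : R} (hr : r • 𝟙 Y = 0) :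
    r • 𝟙 (K.linearYonedaObj R Y) = 0 := by
  ext j (f : K.X j ⟶ Y)
  change r • f = 0
  rw [← Category.comp_id f, ← Linear.comp_smul, hr, Limits.comp_zero]

variable [EnoughProjectives C]

lemma smul_id_ext_eq_zero_of_homotopy {X Y : C} (P : ProjectiveResolution X) {r : R}
    (h : Homotopy (r • 𝟙 (P.complex.linearYonedaObj R Y)) 0) (n : ℕ) :
    r • 𝟙 (((Ext R C n).obj (Opposite.op X)).obj Y) = 0 := by
  let e := P.isoExt (R := R) n Y
  calc r • 𝟙 _ = e.hom ≫ (r • 𝟙 _) ≫ e.inv := by simp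
    _ = 0 := by rw [smul_id_homology_eq_zero h, Limits.zero_comp, Limits.comp_zero]

lemma smul_id_ext_eq_zero_of_left {X : C} {r : R} (hr : r • 𝟙 X = 0) (Y : C) (n : ℕ) :
    r • 𝟙 (((Ext R C n).obj (Opposite.op X)).obj Y) = 0 :=
  let P := projectiveResolution X
  smul_id_ext_eq_zero_of_homotopy P
    (linearYonedaObjHomotopyZero (projectiveResolutionHomotopyZero P hr) Y) n

lemma smul_id_ext_eq_zero_of_right (X : C) {Y : C} {r : R} (hr : r • 𝟙 Y = 0) (n : ℕ) :
    r • 𝟙 (((Ext R C n).obj (Opposite.op X)).obj Y) = 0 :=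
  let P := projectiveResolution X
  smul_id_ext_eq_zero_of_homotopy P
    (Homotopy.ofEq (smul_id_linearYonedaObj_eq_zero P.complex hr)) n

end ExtAnnihilator

lemma mem_annihilator_iff_smul_id_eq_zero {R : Type*} [CommRing R] {M : ModuleCat R} {r : R} :
    r ∈ Module.annihilator R M ↔ r • 𝟙 M = 0 := by
  rw [Module.mem_annihilator, ModuleCat.hom_ext_iff, LinearMap.ext_iff]
  rfl

lemma annihilator_sup_annihilator_le_annihilator_extModule (R : Type u) [CommRing R]
    (M N : Type u) [AddCommGroup M] [Module R M] [AddCommGroup N] [Module R N] (i : ℕ) :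
    Module.annihilator R M ⊔ Module.annihilator R N ≤
      Module.annihilator R (extModule R M N i) := by
  refine sup_le (fun r hr ↦ ?_) fun r hr ↦ ?_ <;> rw [mem_annihilator_iff_smul_id_eq_zero]
  · exact smul_id_ext_eq_zero_of_left
      (mem_annihilator_iff_smul_id_eq_zero (M := .of R M).mp hr) _ i
  · exact smul_id_ext_eq_zero_of_right _
      (mem_annihilator_iff_smul_id_eq_zero (M := .of R N).mp hr) i

section BaseChange

variable {R : Type*} (S : Type*) [CommRing R] [CommRing S] [Algebra R S]

lemma bijective_algebraMap_quotient_iff (I : Ideal R) :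
    Function.Bijective (algebraMap (R ⧸ I) (S ⧸ I.map (algebraMap R S))) ↔
      Function.Bijective (TensorProduct.mk R S (R ⧸ I) 1) := by
  let e := Algebra.TensorProduct.quotIdealMapEquivTensorQuot S I
  have he : ⇑e ∘ algebraMap (R ⧸ I) (S ⧸ I.map (algebraMap R S)) =
      TensorProduct.mk R S (R ⧸ I) 1 := by
    ext x
    obtain ⟨r, rfl⟩ := Ideal.Quotient.mk_surjective x
    change algebraMap R S r ⊗ₜ[R] (1 : R ⧸ I) = 1 ⊗ₜ[R] algebraMap R (R ⧸ I) r
    rw [Algebra.algebraMap_eq_smul_one, TensorProduct.smul_tmul, Algebra.algebraMap_eq_smul_one]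
  rw [← he, Function.Bijective.of_comp_iff' e.bijective]

lemma bijective_mk_one_congr {L L' : Type*} [AddCommGroup L] [Module R L] [AddCommGroup L']
    [Module R L'] (e : L ≃ₗ[R] L') :
    Function.Bijective (TensorProduct.mk R S L 1) ↔
      Function.Bijective (TensorProduct.mk R S L' 1) := by
  have he : ⇑(e.lTensor S) ∘ TensorProduct.mk R S L 1 = TensorProduct.mk R S L' 1 ∘ e := by
    ext x
    simp
  rw [← Function.Bijective.of_comp_iff' (e.lTensor S).bijective, he,
    Function.Bijective.of_comp_iff _ e.bijective]

lemma bijective_mk_one_of_exact [Module.Flat R S] {L₁ L₂ L₃ : Type*} [AddCommGroup L₁]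
    [Module R L₁] [AddCommGroup L₂] [Module R L₂] [AddCommGroup L₃] [Module R L₃]
    {f : L₁ →ₗ[R] L₂} {g : L₂ →ₗ[R] L₃} (hf : Function.Injective f) (hg : Function.Surjective g)
    (hfg : Function.Exact f g) (h₁ : Function.Bijective (TensorProduct.mk R S L₁ 1))
    (h₃ : Function.Bijective (TensorProduct.mk R S L₃ 1)) :
    Function.Bijective (TensorProduct.mk R S L₂ 1) := by
  have hSf : Function.Injective (f.lTensor S) :=
    Module.Flat.lTensor_preserves_injective_linearMap f hf
  have hSfg : Function.Exact (f.lTensor S) (g.lTensor S) := lTensor_exact S hfg hg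
  exact LinearMap.bijective_of_surjective_of_bijective_of_bijective_of_injective
    (0 : PUnit →ₗ[R] L₁) f g (0 : L₃ →ₗ[R] PUnit)
    (0 : PUnit →ₗ[R] S ⊗[R] L₁) (f.lTensor S) (g.lTensor S) (0 : S ⊗[R] L₃ →ₗ[R] PUnit)
    0 (TensorProduct.mk R S L₁ 1) (TensorProduct.mk R S L₂ 1) (TensorProduct.mk R S L₃ 1) 0
    (by simp) (by ext; simp) (by ext; simp) (by simp)
    ((LinearMap.exact_zero_iff_injective _ f).mpr hf) hfg
    ((LinearMap.exact_zero_iff_surjective _ g).mpr hg)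
    ((LinearMap.exact_zero_iff_injective _ _).mpr hSf) hSfg
    ((LinearMap.exact_zero_iff_surjective _ _).mpr (g.lTensor_surjective S hg))
    (Function.surjective_to_subsingleton _) h₁ h₃ (Function.injective_of_subsingleton _)

lemma bijective_mk_one_of_forall_mem_support [IsNoetherianRing R] [Module.Flat R S] (L : Type*)
    [AddCommGroup L] [Module R L] [hL : Module.Finite R L]
    (h : ∀ p ∈ Module.support R L, Function.Bijective (TensorProduct.mk R S (R ⧸ p.asIdeal) 1)) :
    Function.Bijective (TensorProduct.mk R S L 1) := by
  induction hL using IsNoetherianRing.induction_on_isQuotientEquivQuotientPrime R with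
  | subsingleton L =>
    exact ⟨Function.injective_of_subsingleton _, Function.surjective_to_subsingleton _⟩
  | quotient L p e =>
    refine (bijective_mk_one_congr S e).mpr (h p ?_)
    simp [e.support_eq, Module.support_eq_zeroLocus, Ideal.annihilator_quotient]
  | exact L₁ L₂ L₃ f g hf hg hfg ih₁ ih₃ =>
    have hL₂ := Module.support_of_exact hfg hf hg
    exact bijective_mk_one_of_exact S hf hg hfg (ih₁ fun p hp ↦ h p (hL₂ ▸ .inl hp))
      (ih₃ fun p hp ↦ h p (hL₂ ▸ .inr hp))

lemma bijective_algebraMap_quotient_of_forall_mem_zeroLocus [IsNoetherianRing R]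
    [Module.Flat R S] (I : Ideal R)
    (h : ∀ p ∈ PrimeSpectrum.zeroLocus (I : Set R),
      Function.Bijective (algebraMap (R ⧸ p.asIdeal) (S ⧸ p.asIdeal.map (algebraMap R S)))) :
    Function.Bijective (algebraMap (R ⧸ I) (S ⧸ I.map (algebraMap R S))) := by
  rw [bijective_algebraMap_quotient_iff]
  refine bijective_mk_one_of_forall_mem_support S (R ⧸ I) fun p hp ↦ ?_
  rw [Module.support_eq_zeroLocus, Ideal.annihilator_quotient] at hp
  exact (bijective_algebraMap_quotient_iff S p.asIdeal).mp (h p hp)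

variable {S} in
lemma hasCompatibleSModule_of_le_annihilator {L : Type*} [AddCommGroup L] [Module R L]
    {I : Ideal R} (hI : I ≤ Module.annihilator R L)
    (hb : Function.Bijective (algebraMap (R ⧸ I) (S ⧸ I.map (algebraMap R S)))) :
    HasCompatibleSModule R S L := by
  have htors : Module.IsTorsionBySet R L I :=
    (Module.isTorsionBySet_iff_subset_annihilator R L).mpr hI
  let := htors.module
  let e := RingEquiv.ofBijective _ hb
  let ψ : S →+* R ⧸ I := e.symm.toRingHom.comp (Ideal.Quotient.mk _)
  have hψ (r : R) : ψ (algebraMap R S r) = Ideal.Quotient.mk I r :=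
    e.symm_apply_eq.mpr (Ideal.Quotient.algebraMap_quotient_map_quotient r).symm
  refine ⟨Module.compHom L ψ, fun r x ↦ ?_⟩
  change ψ (algebraMap R S r) • x = r • x
  rw [hψ]
  exact htors.mk_smul r x

end BaseChange

theorem ext_hasCompatibleSModule_general
    (R : Type u) (S : Type*) [CommRing R] [CommRing S] [IsNoetherianRing R] [Algebra R S]
    [Module.Flat R S]
    (M N : Type u) [AddCommGroup M] [Module R M] [Module.Finite R M]
    [AddCommGroup N] [Module R N] [Module.Finite R N]
    (h : ∀ p : PrimeSpectrum R, p ∈ Module.support R M ∩ Module.support R N →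
      Function.Bijective
        (Ideal.quotientMap (p.asIdeal.map (algebraMap R S)) (algebraMap R S)
          Ideal.le_comap_map)) (i : ℕ) :
    HasCompatibleSModule R S (extModule R M N i) := by
  have hsupp : PrimeSpectrum.zeroLocus (Module.annihilator R M ⊔ Module.annihilator R N : Ideal R) =
      Module.support R M ∩ Module.support R N := by
    rw [PrimeSpectrum.zeroLocus_sup, Module.support_eq_zeroLocus, Module.support_eq_zeroLocus]
  exact hasCompatibleSModule_of_le_annihilator
    (annihilator_sup_annihilator_le_annihilator_extModule R M N i)
    (bijective_algebraMap_quotient_of_forall_mem_zeroLocus S _ fun p hp ↦ h p (hsupp ▸ hp))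

/-- Let `φ : (R, m) → (S, n)` be a flat local homomorphism of commutative Noetherian local
rings such that `R/m → S/mS` is an isomorphism, and let `M`, `N` be finitely generated
`R`-modules. If `R/p → S/pS` is an isomorphism for every `p ∈ Supp_R M ∩ Supp_R N`, then
`Ext^i_R(M, N)` has a compatible `S`-module structure for all `i ≥ 0`. -/
theorem ext_hasCompatibleSModule
    (R S : Type u) [CommRing R] [CommRing S] [IsLocalRing R] [IsLocalRing S]
    [IsNoetherianRing R] [IsNoetherianRing S] [Algebra R S] [Module.Flat R S]
    [IsLocalHom (algebraMap R S)]
    (hres : Function.Bijective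
      (Ideal.quotientMap ((IsLocalRing.maximalIdeal R).map (algebraMap R S)) (algebraMap R S)
        Ideal.le_comap_map))
    (M N : Type u) [AddCommGroup M] [Module R M] [Module.Finite R M]
    [AddCommGroup N] [Module R N] [Module.Finite R N]
    (h : ∀ p : PrimeSpectrum R, p ∈ Module.support R M ∩ Module.support R N →
      Function.Bijective
        (Ideal.quotientMap (p.asIdeal.map (algebraMap R S)) (algebraMap R S)
          Ideal.le_comap_map)) :
    ∀ i : ℕ, HasCompatibleSModule R S (extModule R M N i) :=
  ext_hasCompatibleSModule_general R S M N h
end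

section
/- Let φ : (R,m) → (S,n) be a flat local homomorphism of commutative Noetherian local rings such that the induced map R/m → S/mS is an isomorphism, and let M and N be finitely generated R-modules. If for every i ≥ 0 the R-module Ext^i_R(M,N) has an S-module structure compatible with its R-module structure via φ, then for every i ≥ 0 there is an isomorphism Ext^i_R(S ⊗_R M, N) ≅ Ext^i_R(M,N) of R-modules; in particular Ext^i_R(S ⊗_R M, N) is finitely generated over R for all i ≥ 0. -/
universe u

open CategoryTheory TensorProduct

/-!
Let `C` be the cokernel of `R → S`; it is flat over `R` and `S = R + mS`. If a finitely generated
`R`-module `E` has a compatible `S`-module structure, then Nakayama's lemma over `S` shows that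
`S ⊗ E → E` is injective, so that `E → S ⊗ E` is onto and `C ⊗ E = 0`. By flatness
`C ⊗ R/I = 0` for `I` the annihilator of `E`, and this gives `Ext^p(C, E) = 0` for all `p`.
Applied to `E = Ext^q(M, N)`, this kills the spectral sequence
`Ext^p(C, Ext^q(M, N)) ⇒ Ext^(p+q)(C ⊗ M, N)`, or rather the dimension shifting
in `N` that replaces it. The long exact sequence of `0 → M → S ⊗ M → C ⊗ M → 0` finishes the proof.
-/

section AbelianCategory

universe v w

variable {𝒞 : Type u} [Category.{v} 𝒞] [Abelian 𝒞] [HasExt.{w} 𝒞]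

/-- `Y` is acyclic for the functor `Hom(X, -)`: the groups `Ext^n(X, Y)` vanish for `n > 0`. -/
def IsHomAcyclic (X Y : 𝒞) : Prop :=
  ∀ n, Subsingleton (Abelian.Ext X Y (n + 1))

/-- `Y` is right orthogonal to `X` in the derived category: `Ext^n(X, Y)` vanishes in every degree,
including `n = 0`. -/
def IsExtOrthogonal (X Y : 𝒞) : Prop :=
  ∀ n, Subsingleton (Abelian.Ext X Y n)

lemma IsExtOrthogonal.isHomAcyclic {X Y : 𝒞} (h : IsExtOrthogonal X Y) : IsHomAcyclic X Y :=
  fun n ↦ h (n + 1)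

lemma subsingleton_ext_zero_iff {X Y : 𝒞} :
    Subsingleton (Abelian.Ext X Y 0) ↔ Subsingleton (X ⟶ Y) :=
  Abelian.Ext.homEquiv₀.subsingleton_congr

lemma subsingleton_ext_congr_right (X : 𝒞) {Y Y' : 𝒞} (e : Y ≅ Y') (n : ℕ) :
    Subsingleton (Abelian.Ext X Y n) ↔ Subsingleton (Abelian.Ext X Y' n) :=
  ((Abelian.extFunctorObj X n).mapIso e).addCommGroupIsoToAddEquiv.subsingleton_congr

lemma IsHomAcyclic.of_iso {X Y Y' : 𝒞} (h : IsHomAcyclic X Y) (e : Y ≅ Y') : IsHomAcyclic X Y' :=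
  fun n ↦ (subsingleton_ext_congr_right X e (n + 1)).1 (h n)

lemma IsExtOrthogonal.of_iso {X Y Y' : 𝒞} (h : IsExtOrthogonal X Y) (e : Y ≅ Y') :
    IsExtOrthogonal X Y' :=
  fun n ↦ (subsingleton_ext_congr_right X e n).1 (h n)

variable {T : ShortComplex 𝒞} (hT : T.ShortExact)

section Covariant

variable {X : 𝒞} {n : ℕ}

include hT

lemma subsingleton_ext_left (h₂ : Subsingleton (Abelian.Ext X T.X₂ (n + 1)))
    (h₃ : Subsingleton (Abelian.Ext X T.X₃ n)) : Subsingleton (Abelian.Ext X T.X₁ (n + 1)) := by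
  refine subsingleton_of_forall_eq 0 fun x ↦ ?_
  obtain ⟨y, rfl⟩ := Abelian.Ext.covariant_sequence_exact₁ X hT x (Subsingleton.elim _ _) rfl
  rw [Subsingleton.elim y 0, Abelian.Ext.zero_comp]

lemma subsingleton_ext_middle (h₁ : Subsingleton (Abelian.Ext X T.X₁ n))
    (h₃ : Subsingleton (Abelian.Ext X T.X₃ n)) : Subsingleton (Abelian.Ext X T.X₂ n) := by
  refine subsingleton_of_forall_eq 0 fun x ↦ ?_
  obtain ⟨y, rfl⟩ := Abelian.Ext.covariant_sequence_exact₂ X hT x (Subsingleton.elim _ _)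
  rw [Subsingleton.elim y 0, Abelian.Ext.zero_comp]

lemma subsingleton_ext_right (h₁ : Subsingleton (Abelian.Ext X T.X₁ (n + 1)))
    (h₂ : Subsingleton (Abelian.Ext X T.X₂ n)) : Subsingleton (Abelian.Ext X T.X₃ n) := by
  refine subsingleton_of_forall_eq 0 fun x ↦ ?_
  obtain ⟨y, rfl⟩ := Abelian.Ext.covariant_sequence_exact₃ X hT x rfl (Subsingleton.elim _ _)
  rw [Subsingleton.elim y 0, Abelian.Ext.zero_comp]

lemma exists_lift_of_subsingleton_ext_one (h₁ : Subsingleton (Abelian.Ext X T.X₁ 1))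
    (f : X ⟶ T.X₃) : ∃ g : X ⟶ T.X₂, g ≫ T.g = f := by
  obtain ⟨y, hy⟩ := Abelian.Ext.covariant_sequence_exact₃ X hT (Abelian.Ext.mk₀ f) rfl
    (Subsingleton.elim _ _)
  obtain ⟨g, rfl⟩ := Abelian.Ext.homEquiv₀.symm.surjective y
  exact ⟨g, Abelian.Ext.homEquiv₀.symm.injective
    ((Abelian.Ext.mk₀_comp_mk₀ g T.g).symm.trans hy)⟩

lemma subsingleton_ext_one_of_exists_lift (h₂ : Subsingleton (Abelian.Ext X T.X₂ 1))
    (hlift : ∀ f : X ⟶ T.X₃, ∃ g : X ⟶ T.X₂, g ≫ T.g = f) :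
    Subsingleton (Abelian.Ext X T.X₁ 1) := by
  refine subsingleton_of_forall_eq 0 fun x ↦ ?_
  obtain ⟨y, rfl⟩ := Abelian.Ext.covariant_sequence_exact₁ X hT x (Subsingleton.elim _ _) rfl
  obtain ⟨f, rfl⟩ := Abelian.Ext.homEquiv₀.symm.surjective y
  obtain ⟨g, rfl⟩ := hlift f
  change (Abelian.Ext.mk₀ (g ≫ T.g)).comp _ _ = 0
  rw [← Abelian.Ext.mk₀_comp_mk₀, Abelian.Ext.comp_assoc_of_second_deg_zero]
  simp

end Covariant

section Contravariant

variable {Y : 𝒞} {n : ℕ}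

include hT

lemma subsingleton_ext_right' (h₁ : Subsingleton (Abelian.Ext T.X₁ Y n))
    (h₂ : Subsingleton (Abelian.Ext T.X₂ Y (n + 1))) :
    Subsingleton (Abelian.Ext T.X₃ Y (n + 1)) := by
  refine subsingleton_of_forall_eq 0 fun x ↦ ?_
  obtain ⟨y, rfl⟩ :=
    Abelian.Ext.contravariant_sequence_exact₃ hT Y x (Subsingleton.elim _ _) (add_comm 1 n)
  rw [Subsingleton.elim y 0, Abelian.Ext.comp_zero]

lemma subsingleton_ext_one_of_exists_extension (h₂ : Subsingleton (Abelian.Ext T.X₂ Y 1))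
    (hext : ∀ f : T.X₁ ⟶ Y, ∃ g : T.X₂ ⟶ Y, T.f ≫ g = f) :
    Subsingleton (Abelian.Ext T.X₃ Y 1) := by
  refine subsingleton_of_forall_eq 0 fun x ↦ ?_
  obtain ⟨y, rfl⟩ :=
    Abelian.Ext.contravariant_sequence_exact₃ hT Y x (Subsingleton.elim _ _) (add_zero 1)
  obtain ⟨f, rfl⟩ := Abelian.Ext.homEquiv₀.symm.surjective y
  obtain ⟨g, rfl⟩ := hext f
  change hT.extClass.comp (Abelian.Ext.mk₀ (T.f ≫ g)) _ = 0
  rw [← Abelian.Ext.mk₀_comp_mk₀, ShortComplex.ShortExact.extClass_comp_assoc]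

lemma precomp_mk₀_bijective (h : IsExtOrthogonal T.X₃ Y) :
    Function.Bijective fun x : Abelian.Ext T.X₂ Y n ↦
      (Abelian.Ext.mk₀ T.f).comp x (zero_add n) := by
  have := h n
  have := h (1 + n)
  refine ⟨(injective_iff_map_eq_zero ((Abelian.Ext.mk₀ T.f).precomp Y (zero_add n))).2
    fun x hx ↦ ?_, fun x ↦ ?_⟩
  · obtain ⟨y, rfl⟩ := Abelian.Ext.contravariant_sequence_exact₂ hT Y x hx
    rw [Subsingleton.elim y 0, Abelian.Ext.comp_zero]
  · exact Abelian.Ext.contravariant_sequence_exact₁ hT Y x rfl (Subsingleton.elim _ _)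

end Contravariant

end AbelianCategory

section Flat

variable {R X Y Z : Type*} [CommRing R] [AddCommGroup X] [AddCommGroup Y] [AddCommGroup Z]
  [Module R X] [Module R Y] [Module R Z]

lemma flat_ker_of_surjective [Module.Flat R Y] [Module.Flat R Z] {f : Y →ₗ[R] Z}
    (hf : Function.Surjective f) : Module.Flat R (LinearMap.ker f) := by
  refine Module.Flat.iff_rTensor_preserves_injective_linearMap.2 fun A B _ _ _ _ i hi ↦ ?_
  have hA : Function.Injective ((LinearMap.ker f).subtype.lTensor A) :=
    LinearMap.lTensor_injective_of_exact_of_flat f hf _ (LinearMap.ker f).injective_subtype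
      f.exact_subtype_ker_map A
  refine Function.Injective.of_comp (f := (LinearMap.ker f).subtype.lTensor B) ?_
  rw [← LinearMap.coe_comp, LinearMap.lTensor_comp_rTensor, ← LinearMap.rTensor_comp_lTensor]
  exact (Module.Flat.rTensor_preserves_injective_linearMap i hi).comp hA

lemma rTensor_lTensor_apply {A B : Type*} [AddCommGroup A] [AddCommGroup B] [Module R A]
    [Module R B] (i : A →ₗ[R] B) (f : X →ₗ[R] Y) (t : A ⊗[R] X) :
    i.rTensor Y (f.lTensor A t) = f.lTensor B (i.rTensor X t) :=
  LinearMap.congr_fun ((i.rTensor_comp_lTensor _ f).trans (i.lTensor_comp_rTensor _ f).symm :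
    i.rTensor Y ∘ₗ f.lTensor A = f.lTensor B ∘ₗ i.rTensor X) t

lemma flat_of_exact_of_lTensor_injective [Module.Flat R Y] {f : X →ₗ[R] Y} {g : Y →ₗ[R] Z}
    (hfg : Function.Exact f g) (hg : Function.Surjective g)
    (hf : ∀ I : Ideal R, Function.Injective (f.lTensor (R ⧸ I))) : Module.Flat R Z := by
  refine Module.Flat.iff_rTensor_injective.2 fun I _ ↦ (injective_iff_map_eq_zero _).2 fun z hz ↦ ?_
  have hX := rTensor_exact X (LinearMap.exact_subtype_mkQ I) I.mkQ_surjective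
  have hY := rTensor_exact Y (LinearMap.exact_subtype_mkQ I) I.mkQ_surjective
  obtain ⟨y, rfl⟩ := LinearMap.lTensor_surjective I hg z
  rw [rTensor_lTensor_apply] at hz
  obtain ⟨x, hx⟩ := (lTensor_exact R hfg hg _).1 hz
  have hx₀ : I.mkQ.rTensor X x = 0 := hf I <| by
    rw [← rTensor_lTensor_apply, hx, hY.apply_apply_eq_zero, map_zero]
  obtain ⟨x', rfl⟩ := (hX x).1 hx₀
  have hy : f.lTensor I x' = y :=
    Module.Flat.rTensor_preserves_injective_linearMap I.subtype I.injective_subtype <| by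
      rw [rTensor_lTensor_apply, hx]
  rw [← hy, (lTensor_exact I hfg hg).apply_apply_eq_zero]

end Flat

section AlgebraCokernel

variable (R S : Type*) [CommRing R] [CommRing S] [Algebra R S] (M : Type*) [AddCommGroup M]
  [Module R M]

/-- The cokernel of the structure map `R → S`, as an `R`-module. -/
abbrev AlgebraCokernel : Type _ :=
  S ⧸ LinearMap.range (Algebra.linearMap R S)

lemma mk_one_comp_lid :
    TensorProduct.mk R S M 1 ∘ₗ TensorProduct.lid R M = (Algebra.linearMap R S).rTensor M := by
  ext
  simp

lemma rTensor_algebraLinearMap_injective [Module.FaithfullyFlat R S] :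
    Function.Injective ((Algebra.linearMap R S).rTensor M) := by
  rw [← mk_one_comp_lid]
  exact (Module.FaithfullyFlat.tensorProduct_mk_injective M).comp (TensorProduct.lid R M).injective

instance flat_algebraCokernel [Module.FaithfullyFlat R S] : Module.Flat R (AlgebraCokernel R S) :=
  flat_of_exact_of_lTensor_injective (LinearMap.exact_map_mkQ_range (Algebra.linearMap R S))
    (Submodule.mkQ_surjective _) fun I ↦
    (LinearMap.lTensor_inj_iff_rTensor_inj _ _).2 (rTensor_algebraLinearMap_injective R S (R ⧸ I))

lemma rTensor_mkQ_exact :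
    Function.Exact (TensorProduct.mk R S M 1)
      ((LinearMap.range (Algebra.linearMap R S)).mkQ.rTensor M) := by
  rw [← LinearEquiv.precomp_exact_iff_exact (e := TensorProduct.lid R M), mk_one_comp_lid]
  exact rTensor_exact M (LinearMap.exact_map_mkQ_range (Algebra.linearMap R S))
    (Submodule.mkQ_surjective _)

variable {R S M} in
lemma subsingleton_algebraCokernel_tensor (h : Function.Surjective (TensorProduct.mk R S M 1)) :
    Subsingleton (AlgebraCokernel R S ⊗[R] M) := by
  refine subsingleton_of_forall_eq 0 fun z ↦ ?_
  obtain ⟨y, rfl⟩ := LinearMap.rTensor_surjective M (Submodule.mkQ_surjective _) z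
  exact (rTensor_mkQ_exact R S M y).2 (h y)

end AlgebraCokernel

section Modules

variable {R : Type u} [Ring R]

lemma shortExact_mkQ_range {A B : Type u} [AddCommGroup A] [AddCommGroup B] [Module R A]
    [Module R B] {f : A →ₗ[R] B} (hf : Function.Injective f) :
    (ModuleCat.shortComplexOfCompEqZero f (LinearMap.range f).mkQ
      f.range_mkQ_comp).ShortExact :=
  ModuleCat.shortComplex_shortExact _ f.exact_map_mkQ_range hf (Submodule.mkQ_surjective _)

lemma exists_injective_linearMap_to_injective (L : Type u) [AddCommGroup L] [Module R L] :
    ∃ (J : Type u) (_ : AddCommGroup J) (_ : Module R J) (_ : Module.Injective R J)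
      (i : L →ₗ[R] J), Function.Injective i :=
  ⟨(Injective.under (ModuleCat.of R L) : ModuleCat.{u} R), inferInstance, inferInstance,
    Module.injective_module_of_injective_object R _ (inj := Injective.injective_under _),
    (Injective.ι (ModuleCat.of R L)).hom, (ModuleCat.mono_iff_injective _).1 inferInstance⟩

section FourTerm

variable {X : ModuleCat.{u} R} {A B D E : Type u} [AddCommGroup A] [AddCommGroup B]
  [AddCommGroup D] [AddCommGroup E] [Module R A] [Module R B] [Module R D] [Module R E]
  {f : A →ₗ[R] B} {g : B →ₗ[R] D} {h : D →ₗ[R] E}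

lemma shortExact_codRestrict_ker (hf : Function.Injective f) (hfg : Function.Exact f g)
    (hgh : Function.Exact g h) :
    (ModuleCat.shortComplexOfCompEqZero f
      (g.codRestrict (LinearMap.ker h) hgh.apply_apply_eq_zero)
      (LinearMap.ext fun a ↦ Subtype.ext (hfg.apply_apply_eq_zero a))).ShortExact :=
  ModuleCat.shortComplex_shortExact _
    (fun b ↦ Subtype.ext_iff.trans (hfg b)) hf fun ⟨d, hd⟩ ↦
      ((hgh d).1 hd).imp fun _ hb ↦ Subtype.ext hb

lemma isHomAcyclic_of_exact (hf : Function.Injective f) (hfg : Function.Exact f g)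
    (hgh : Function.Exact g h) (hh : Function.Surjective h)
    (hA : IsHomAcyclic X (ModuleCat.of R A)) (hB : IsHomAcyclic X (ModuleCat.of R B))
    (hE : IsHomAcyclic X (ModuleCat.of R E)) : IsHomAcyclic X (ModuleCat.of R D) := fun n ↦
  subsingleton_ext_middle (LinearMap.shortExact_shortComplexKer hh)
    (subsingleton_ext_right (shortExact_codRestrict_ker hf hfg hgh) (hA (n + 1)) (hB n)) (hE n)

lemma exists_lift_of_exact (hf : Function.Injective f) (hfg : Function.Exact f g)
    (hgh : Function.Exact g h) (hA : Subsingleton (Abelian.Ext X (ModuleCat.of R A) 1))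
    (hE : Subsingleton (X →ₗ[R] E)) (φ : X →ₗ[R] D) : ∃ ψ : X →ₗ[R] B, g ∘ₗ ψ = φ := by
  have hφ (x : X) : φ x ∈ LinearMap.ker h :=
    LinearMap.congr_fun (Subsingleton.elim (h ∘ₗ φ) 0) x
  obtain ⟨ψ, hψ⟩ := exists_lift_of_subsingleton_ext_one (shortExact_codRestrict_ker hf hfg hgh) hA
    (ModuleCat.ofHom (φ.codRestrict _ hφ))
  refine ⟨ψ.hom, LinearMap.ext fun x ↦ ?_⟩
  exact congrArg Subtype.val (LinearMap.congr_fun (congrArg ModuleCat.Hom.hom hψ) x)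

end FourTerm

end Modules

section FlatSource

variable {R : Type u} [CommRing R]

lemma exists_extension_of_rTensor_injective {K P M J : Type u} [AddCommGroup K] [AddCommGroup P]
    [AddCommGroup M] [AddCommGroup J] [Module R K] [Module R P] [Module R M] [Module R J]
    [Module.Injective R J] {i : K →ₗ[R] P} (hi : Function.Injective (i.rTensor M))
    (f : K →ₗ[R] M →ₗ[R] J) : ∃ g : P →ₗ[R] M →ₗ[R] J, g ∘ₗ i = f := by
  obtain ⟨g, hg⟩ := Module.Injective.extension_property R J _ _ (i.rTensor M) hi (lift f)
  refine ⟨curry g, LinearMap.ext₂ fun k m ↦ ?_⟩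
  exact LinearMap.congr_fun hg (k ⊗ₜ m)

lemma isHomAcyclic_linearMap_of_injective (C : ModuleCat.{u} R) [Module.Flat R C]
    (M J : Type u) [AddCommGroup M] [Module R M] [AddCommGroup J] [Module R J]
    [Module.Injective R J] : IsHomAcyclic C (ModuleCat.of R (M →ₗ[R] J)) := by
  intro n
  induction n generalizing C with
  | zero =>
    have hC := C.shortExact_projectiveShortComplex
    refine subsingleton_ext_one_of_exists_extension hC
      (Abelian.Ext.subsingleton_of_projective _ _ _) fun f ↦ ?_
    have hinj : Function.Injective (C.projectiveShortComplex.f.hom.rTensor M) :=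
      (LinearMap.lTensor_inj_iff_rTensor_inj _ _).1 <|
        LinearMap.lTensor_injective_of_exact_of_flat _ hC.moduleCat_surjective_g _
          hC.moduleCat_injective_f
          ((ShortComplex.ShortExact.moduleCat_exact_iff_function_exact _).1 hC.exact) M
    obtain ⟨g, hg⟩ := exists_extension_of_rTensor_injective hinj f.hom
    exact ⟨ModuleCat.ofHom g, ModuleCat.hom_ext hg⟩
  | succ n ih =>
    have hC := C.shortExact_projectiveShortComplex
    have : Module.Flat R C.projectiveShortComplex.X₁ :=
      flat_ker_of_surjective hC.moduleCat_surjective_g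
    exact subsingleton_ext_right' hC (ih _) (Abelian.Ext.subsingleton_of_projective _ _ _)

section Torsion

variable {L : Type*} [AddCommGroup L] [Module R L] {I : Ideal R}

lemma exists_linearMap_quotient_apply_one (hL : Module.IsTorsionBySet R L I) :
    ∃ σ : L →ₗ[R] (R ⧸ I) →ₗ[R] L, ∀ x, σ x 1 = x := by
  let := hL.module
  exact ⟨(Algebra.lsmul R R L).toLinearMap.flip, fun x ↦ one_smul (R ⧸ I) x⟩

lemma subsingleton_linearMap_of_isTorsionBySet {C : Type*} [AddCommGroup C] [Module R C]
    (hC : Subsingleton (C ⊗[R] (R ⧸ I))) (hL : Module.IsTorsionBySet R L I) :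
    Subsingleton (C →ₗ[R] L) := by
  obtain ⟨σ, hσ⟩ := exists_linearMap_quotient_apply_one hL
  refine subsingleton_of_forall_eq 0 fun f ↦ LinearMap.ext fun c ↦ ?_
  calc f c = lift (σ ∘ₗ f) (c ⊗ₜ 1) := (hσ (f c)).symm
    _ = 0 := by rw [Subsingleton.elim (c ⊗ₜ[R] (1 : R ⧸ I)) 0, map_zero]

lemma isTorsionBySet_linearMap_quotient (I : Ideal R) (L : Type*) [AddCommGroup L] [Module R L] :
    Module.IsTorsionBySet R ((R ⧸ I) →ₗ[R] L) I := fun f a ↦ LinearMap.ext fun x ↦ by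
  have hI : Module.IsTorsionBySet R (R ⧸ I) I :=
    (Module.isTorsionBySet_quotient_iff I I).2 fun y _ hr ↦ I.mul_mem_right y hr
  rw [LinearMap.smul_apply, ← map_smul, hI, map_zero, LinearMap.zero_apply]

end Torsion

lemma isExtOrthogonal_of_isTorsionBySet (C : ModuleCat.{u} R) [Module.Flat R C] {I : Ideal R}
    (hC : Subsingleton (C ⊗[R] (R ⧸ I))) (L : Type u) [AddCommGroup L] [Module R L]
    (hL : Module.IsTorsionBySet R L I) : IsExtOrthogonal C (ModuleCat.of R L) := by
  intro n
  induction n generalizing L with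
  | zero =>
    exact subsingleton_ext_zero_iff.2 <| ModuleCat.homEquiv.subsingleton_congr.2 <|
      subsingleton_linearMap_of_isTorsionBySet hC hL
  | succ n ih =>
    -- `L` embeds into `Hom(R ⧸ I, J)`, which is acyclic and, like the cokernel, killed by `I`.
    obtain ⟨σ, hσ⟩ := exists_linearMap_quotient_apply_one hL
    obtain ⟨J, _, _, _, i, hi⟩ := exists_injective_linearMap_to_injective (R := R) L
    have hinj : Function.Injective (σ.compr₂ i) := fun x y hxy ↦ hi <| by
      simpa [hσ] using LinearMap.congr_fun hxy 1
    exact subsingleton_ext_left (shortExact_mkQ_range hinj)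
      (isHomAcyclic_linearMap_of_injective C (R ⧸ I) J n)
      (ih _ ((isTorsionBySet_linearMap_quotient I J).quotient _))

end FlatSource

section Annihilator

variable {R : Type*} [CommRing R]

lemma exists_injective_linearMap_quotient_annihilator (L : Type*) [AddCommGroup L]
    [Module R L] [Module.Finite R L] :
    ∃ (n : ℕ) (f : (R ⧸ Module.annihilator R L) →ₗ[R] Fin n → L), Function.Injective f := by
  obtain ⟨n, s, hs⟩ := Module.Finite.exists_fin (R := R) (M := L)
  let f : R →ₗ[R] Fin n → L := LinearMap.pi fun i ↦ LinearMap.toSpanSingleton R L (s i)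
  have hf : LinearMap.ker f = Module.annihilator R L := by
    ext r
    rw [← Submodule.annihilator_top, ← hs, Submodule.mem_annihilator_span, LinearMap.mem_ker]
    simp [f, funext_iff]
  rw [← hf]
  exact ⟨n, _, LinearMap.ker_eq_bot.1 ((LinearMap.ker f).ker_liftQ_eq_bot f le_rfl le_rfl)⟩

lemma subsingleton_tensor_quotient_annihilator (C L : Type*) [AddCommGroup C] [AddCommGroup L]
    [Module R C] [Module R L] [Module.Flat R C] [Module.Finite R L]
    (h : Subsingleton (C ⊗[R] L)) : Subsingleton (C ⊗[R] (R ⧸ Module.annihilator R L)) := by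
  obtain ⟨n, f, hf⟩ := exists_injective_linearMap_quotient_annihilator (R := R) L
  have := (piRight R R C fun _ : Fin n ↦ L).toEquiv.subsingleton
  exact (Module.Flat.lTensor_preserves_injective_linearMap (M := C) f hf).subsingleton

end Annihilator

lemma isExtOrthogonal_of_subsingleton_tensor {R : Type u} [CommRing R] (C L : ModuleCat.{u} R)
    [Module.Flat R C] [Module.Finite R L] (h : Subsingleton (C ⊗[R] L)) : IsExtOrthogonal C L :=
  isExtOrthogonal_of_isTorsionBySet C (subsingleton_tensor_quotient_annihilator C L h) L
    (Module.isTorsionBySet_annihilator R L)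

section Nakayama

variable (R S L : Type*) [CommRing R] [CommRing S] [Algebra R S] [AddCommGroup L] [Module R L]

/-- The scalar multiplication `S ⊗ L → L` of an `S`-module `L`, where the tensor product is taken
over `R` and `S` acts on its left factor. -/
abbrev tensorSMul [Module S L] [IsScalarTower R S L] : S ⊗[R] L →ₗ[S] L :=
  LinearMap.liftBaseChange S LinearMap.id

variable {R S L} {𝔞 : Ideal R} (h𝔞 : 𝔞.map (algebraMap R S) ≤ Ideal.jacobson ⊥)
  (hsurj : Function.Surjective
    (Ideal.quotientMap (𝔞.map (algebraMap R S)) (algebraMap R S) Ideal.le_comap_map))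

include hsurj

lemma exists_sub_algebraMap_mem (s : S) :
    ∃ r : R, s - algebraMap R S r ∈ 𝔞.map (algebraMap R S) := by
  obtain ⟨q, hq⟩ := hsurj (Ideal.Quotient.mk _ s)
  obtain ⟨r, rfl⟩ := Ideal.Quotient.mk_surjective q
  rw [Ideal.quotientMap_mk, eq_comm, Ideal.Quotient.eq] at hq
  exact ⟨r, hq⟩

lemma tmul_sub_one_tmul_smul_mem [Module S L] [IsScalarTower R S L] (s : S) (x : L) :
    s ⊗ₜ[R] x - 1 ⊗ₜ[R] (s • x) ∈ 𝔞.map (algebraMap R S) • LinearMap.ker (tensorSMul R S L) := by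
  let δ : S →ₗ[R] S ⊗[R] L :=
    (TensorProduct.mk R S L).flip x -
      TensorProduct.mk R S L 1 ∘ₗ (LinearMap.toSpanSingleton S L x).restrictScalars R
  have map_δ_le_ker : (⊤ : Submodule R S).map δ ≤
      (LinearMap.ker (tensorSMul R S L)).restrictScalars R := by
    rintro _ ⟨t, -, rfl⟩
    simp [δ]
  obtain ⟨r, hr⟩ := exists_sub_algebraMap_mem hsurj s
  have hδ : δ s = δ (s - algebraMap R S r) := by
    have : δ (algebraMap R S r) = 0 := by simp [δ, Algebra.algebraMap_eq_smul_one]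
    rw [map_sub, this, sub_zero]
  change δ s ∈ (𝔞.map (algebraMap R S) • LinearMap.ker (tensorSMul R S L)).restrictScalars R
  rw [hδ, Ideal.smul_restrictScalars]
  refine smul_mono_right 𝔞 map_δ_le_ker ?_
  rw [← Submodule.map_smul'']
  refine Submodule.mem_map_of_mem ?_
  rw [Ideal.smul_top_eq_map]
  exact hr

include h𝔞

lemma injective_tensorSMul [Module S L] [IsScalarTower R S L] [IsNoetherianRing S]
    [Module.Finite R L] : Function.Injective (tensorSMul R S L) := by
  have sub_one_tmul_mem (z : S ⊗[R] L) : z - 1 ⊗ₜ[R] tensorSMul R S L z ∈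
      𝔞.map (algebraMap R S) • LinearMap.ker (tensorSMul R S L) := by
    induction z with
    | zero => simp
    | tmul s x => simpa using tmul_sub_one_tmul_smul_mem hsurj s x
    | add z w hz hw =>
      rw [map_add, tmul_add, add_sub_add_comm]
      exact add_mem hz hw
  -- By `sub_one_tmul_mem` the kernel `K` satisfies `K ≤ 𝔞K`, so Nakayama's lemma applies.
  refine LinearMap.ker_eq_bot.1 <|
    Submodule.eq_bot_of_le_smul_of_le_jacobson_bot _ _ (IsNoetherian.noetherian _)
      (fun z hz ↦ ?_) h𝔞
  simpa [LinearMap.mem_ker.1 hz] using sub_one_tmul_mem z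

lemma surjective_mk_one_of_hasCompatibleSModule [IsNoetherianRing S] [Module.Finite R L]
    (hL : HasCompatibleSModule R S L) : Function.Surjective (TensorProduct.mk R S L 1) := by
  obtain ⟨_, hcompat⟩ := hL
  have := IsScalarTower.of_algebraMap_smul hcompat
  exact fun z ↦ ⟨tensorSMul R S L z, injective_tensorSMul h𝔞 hsurj (by simp)⟩

end Nakayama

section TensorSource

variable {R : Type u} [CommRing R]

section DimensionShift

variable {T : ShortComplex (ModuleCat.{u} R)} (hT : T.ShortExact) (X : ModuleCat.{u} R)

include hT in
lemma exact_postcompOfLinear_mk₀ (n : ℕ) :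
    Function.Exact ((Abelian.Ext.mk₀ T.f).postcompOfLinear R X (add_zero n))
      ((Abelian.Ext.mk₀ T.g).postcompOfLinear R X (add_zero n)) :=
  (ShortComplex.ab_exact_iff_function_exact _).1 (Abelian.Ext.covariant_sequence_exact₂' X hT n)

lemma exact_postcompOfLinear_mk₀_extClass (n : ℕ) :
    Function.Exact ((Abelian.Ext.mk₀ T.g).postcompOfLinear R X (add_zero n))
      (hT.extClass.postcompOfLinear R X rfl) :=
  (ShortComplex.ab_exact_iff_function_exact _).1
    (Abelian.Ext.covariant_sequence_exact₃' X hT n (n + 1) rfl)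

lemma bijective_postcompOfLinear_extClass [Injective T.X₂] (n : ℕ) :
    Function.Bijective (hT.extClass.postcompOfLinear R X (rfl : n + 1 + 1 = n + 1 + 1)) := by
  refine ⟨(injective_iff_map_eq_zero _).2 fun x hx ↦ ?_,
    postcomp_extClass_surjective_of_projective_X₂ hT X (n + 1)⟩
  obtain ⟨y, rfl⟩ := (exact_postcompOfLinear_mk₀_extClass hT X (n + 1) x).1 hx
  rw [Abelian.Ext.eq_zero_of_injective y, map_zero]

end DimensionShift

/-- The identification of `Ext⁰` with the module of linear maps. -/
noncomputable def extZeroLinearEquiv (X Y : ModuleCat.{u} R) :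
    Abelian.Ext X Y 0 ≃ₗ[R] X →ₗ[R] Y :=
  Abelian.Ext.linearEquiv₀.trans ModuleCat.homLinearEquiv

lemma extZeroLinearEquiv_comp_mk₀ {X Y Z : ModuleCat.{u} R} (x : Abelian.Ext X Y 0) (g : Y ⟶ Z) :
    extZeroLinearEquiv X Z (x.comp (Abelian.Ext.mk₀ g) (add_zero 0)) =
      g.hom ∘ₗ extZeroLinearEquiv X Y x := by
  obtain ⟨f, rfl⟩ := (extZeroLinearEquiv X Y).symm.surjective x
  have hcomp : ((extZeroLinearEquiv X Y).symm f).comp (Abelian.Ext.mk₀ g) (add_zero 0) =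
      (extZeroLinearEquiv X Z).symm (g.hom ∘ₗ f) :=
    Abelian.Ext.mk₀_comp_mk₀ (ModuleCat.ofHom f) g
  rw [hcomp, LinearEquiv.apply_symm_apply, LinearEquiv.apply_symm_apply]

variable {C M N : ModuleCat.{u} R}

/-- The condition on `Ext^q(M, N)` under which, for flat `C`, the spectral sequence
`Ext^p(C, Ext^q(M, N)) ⇒ Ext^(p+q)(C ⊗ M, N)` collapses onto `Hom(C, Hom(M, N))`. `Hom(M, N)` is
encoded as `Ext^0(M, N)`. -/
structure ExtCollapses (C M N : ModuleCat.{u} R) : Prop where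
  hom_acyclic : IsHomAcyclic C (ModuleCat.of R (Abelian.Ext M N 0))
  ext_orthogonal (j : ℕ) : IsExtOrthogonal C (ModuleCat.of R (Abelian.Ext M N (j + 1)))

lemma isHomAcyclic_ext_zero_of_injective [Module.Flat R C] [Injective N] :
    IsHomAcyclic C (ModuleCat.of R (Abelian.Ext M N 0)) := by
  have : Module.Injective R N := Module.injective_module_of_injective_object R N
  exact (isHomAcyclic_linearMap_of_injective C M N).of_iso
    (extZeroLinearEquiv M N).symm.toModuleIso

lemma ExtCollapses.of_shortExact [Module.Flat R C] {T : ShortComplex (ModuleCat.{u} R)}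
    (hT : T.ShortExact) [Injective T.X₂] (h : ExtCollapses C M T.X₁) : ExtCollapses C M T.X₃ where
  hom_acyclic := by
    have := hT.mono_f
    exact isHomAcyclic_of_exact (Abelian.Ext.postcomp_mk₀_injective_of_mono M T.f)
      (exact_postcompOfLinear_mk₀ hT M 0) (exact_postcompOfLinear_mk₀_extClass hT M 0)
      (postcomp_extClass_surjective_of_projective_X₂ hT M 0) h.hom_acyclic
      isHomAcyclic_ext_zero_of_injective (h.ext_orthogonal 0).isHomAcyclic
  ext_orthogonal j := (h.ext_orthogonal (j + 1)).of_iso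
    (LinearEquiv.ofBijective _ (bijective_postcompOfLinear_extClass hT M j)).symm.toModuleIso

lemma ExtCollapses.exists_lift {T : ShortComplex (ModuleCat.{u} R)}
    (hT : T.ShortExact) (h : ExtCollapses C M T.X₁) (f : ModuleCat.of R (C ⊗[R] M) ⟶ T.X₃) :
    ∃ g : ModuleCat.of R (C ⊗[R] M) ⟶ T.X₂, g ≫ T.g = f := by
  have := hT.mono_f
  obtain ⟨ψ, hψ⟩ := exists_lift_of_exact (Abelian.Ext.postcomp_mk₀_injective_of_mono M T.f)
    (exact_postcompOfLinear_mk₀ hT M 0) (exact_postcompOfLinear_mk₀_extClass hT M 0)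
    (h.hom_acyclic 0)
    (ModuleCat.homEquiv.subsingleton_congr.1 (subsingleton_ext_zero_iff.1 (h.ext_orthogonal 0 0)))
    ((extZeroLinearEquiv M T.X₃).symm ∘ₗ curry f.hom)
  refine ⟨ModuleCat.ofHom (lift (extZeroLinearEquiv M T.X₂ ∘ₗ ψ)),
    ModuleCat.hom_ext (TensorProduct.ext' fun c m ↦ ?_)⟩
  have hc : (ψ c).comp (Abelian.Ext.mk₀ T.g) (add_zero 0) =
      (extZeroLinearEquiv M T.X₃).symm (curry f.hom c) := LinearMap.congr_fun hψ c
  calc T.g (extZeroLinearEquiv M T.X₂ (ψ c) m)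
    _ = extZeroLinearEquiv M T.X₃ ((ψ c).comp (Abelian.Ext.mk₀ T.g) (add_zero 0)) m := by
      rw [extZeroLinearEquiv_comp_mk₀, LinearMap.comp_apply]
    _ = f (c ⊗ₜ m) := by rw [hc, LinearEquiv.apply_symm_apply]; rfl

lemma ExtCollapses.isHomAcyclic_tensor [Module.Flat R C] (h : ExtCollapses C M N) :
    IsHomAcyclic (ModuleCat.of R (C ⊗[R] M)) N := by
  intro n
  induction n generalizing N with
  | zero =>
    obtain ⟨J, _, _, _, i, hi⟩ := exists_injective_linearMap_to_injective (R := R) N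
    have hJ : Injective (ModuleCat.of R J) := Module.injective_object_of_injective_module R J
    exact subsingleton_ext_one_of_exists_lift (shortExact_mkQ_range hi)
      (Abelian.Ext.subsingleton_of_injective _ _ 0) (h.exists_lift (shortExact_mkQ_range hi))
  | succ n ih =>
    obtain ⟨J, _, _, _, i, hi⟩ := exists_injective_linearMap_to_injective (R := R) N
    have hJ : Injective (ModuleCat.of R J) := Module.injective_object_of_injective_module R J
    exact subsingleton_ext_left (shortExact_mkQ_range hi)
      (Abelian.Ext.subsingleton_of_injective _ _ _) (ih (h.of_shortExact (shortExact_mkQ_range hi)))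

lemma isExtOrthogonal_tensor [Module.Flat R C]
    (h : ∀ j, IsExtOrthogonal C (ModuleCat.of R (Abelian.Ext M N j))) :
    IsExtOrthogonal (ModuleCat.of R (C ⊗[R] M)) N
  | 0 => by
    have hC : Subsingleton (C →ₗ[R] Abelian.Ext M N 0) :=
      ModuleCat.homEquiv.subsingleton_congr.1 (subsingleton_ext_zero_iff.1 (h 0 0))
    have hHom : Subsingleton (C →ₗ[R] M →ₗ[R] N) :=
      ((extZeroLinearEquiv M N).congrRight (M := C)).toEquiv.subsingleton_congr.1 hC
    exact subsingleton_ext_zero_iff.2 (ModuleCat.homEquiv.subsingleton_congr.2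
      (lift.equiv (.id R) C M N).symm.toEquiv.subsingleton)
  | n + 1 => ExtCollapses.isHomAcyclic_tensor ⟨(h 0).isHomAcyclic, fun j ↦ h (j + 1)⟩ n

end TensorSource

section Comparison

universe v w

/-- The homology of `T` is presented by any surjection from the cycles of `T` whose kernel consists
of the boundaries. -/
noncomputable def homologyLinearEquivOfSurjective {R : Type*} [CommRing R]
    (T : ShortComplex (ModuleCat.{v} R)) {E : Type*} [AddCommGroup E] [Module R E]
    (p : LinearMap.ker T.g.hom →ₗ[R] E) (hp : Function.Surjective p)
    (hker : ∀ x, p x = 0 ↔ ∃ y, T.f.hom y = x) : T.homology ≃ₗ[R] E :=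
  have hrange : LinearMap.range T.moduleCatToCycles = LinearMap.ker p := by
    ext x
    rw [LinearMap.mem_ker, hker, LinearMap.mem_range]
    exact exists_congr fun y ↦ Subtype.ext_iff
  T.moduleCatHomologyIso.toLinearEquiv.trans <|
    (Submodule.quotEquivOfEq _ _ hrange).trans (p.quotKerEquivOfSurjective hp)

variable {R : Type*} [CommRing R] {𝒞 : Type u} [Category.{v} 𝒞] [Abelian 𝒞] [HasExt.{w} 𝒞]
  {X Y : 𝒞} (P : ProjectiveResolution X)

open CochainComplex CochainComplex.HomComplex ProjectiveResolution in
lemma extMk_zero_eq_zero_iff (f : P.complex.X 0 ⟶ Y) (hf : P.complex.d 1 0 ≫ f = 0) :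
    P.extMk f 1 rfl hf = 0 ↔ f = 0 := by
  refine ⟨fun h ↦ ?_, fun h ↦ by simp [h]⟩
  rw [← P.extEquivCohomologyClass.apply_eq_iff_eq, extEquivCohomologyClass_extMk,
    extEquivCohomologyClass_zero, CohomologyClass.mk_eq_zero_iff,
    Cocycle.toSingleMk_mem_coboundaries_iff _ _ _ _ _ 1 (by simp)] at h
  obtain ⟨g, hg⟩ := h
  have hX : Limits.IsZero (P.cochainComplex.X 1) := P.cochainComplex.isZero_of_isStrictlyLE 0 1
  rw [hX.eq_of_src g 0, Limits.comp_zero] at hg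
  rw [← cancel_epi (P.cochainComplexXIso (-(0 : ℕ)) 0 rfl).hom]
  simpa using hg.symm

lemma extMk_eq_zero_iff_exists_d_prev_comp {n : ℕ} (f : P.complex.X n ⟶ Y)
    (hf : P.complex.d (n + 1) n ≫ f = 0) :
    P.extMk f (n + 1) rfl hf = 0 ↔
      ∃ g, P.complex.d n ((ComplexShape.up ℕ).prev n) ≫ g = f := by
  cases n with
  | zero => simp [extMk_zero_eq_zero_iff P f hf, eq_comm]
  | succ n =>
    rw [CochainComplex.prev_nat_succ]
    exact P.extMk_eq_zero_iff f (n + 1 + 1) rfl hf n rfl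

variable [Linear R 𝒞]

lemma extMk_smul {n : ℕ} (r : R) (f : P.complex.X n ⟶ Y) (hf : P.complex.d (n + 1) n ≫ f = 0) :
    P.extMk (r • f) (n + 1) rfl (by simp [hf]) = r • P.extMk f (n + 1) rfl hf := by
  rw [Abelian.Ext.smul_eq_comp_mk₀, P.extMk_comp_mk₀]
  congr 1
  simp

/-- The class in `Ext^n(X, Y)` of a cocycle of degree `n` in the complex computing `Ext` from a
projective resolution of `X`. -/
noncomputable def extMkₗ (n : ℕ) :
    LinearMap.ker ((P.complex.linearYonedaObj R Y).d n (n + 1)).hom →ₗ[R] Abelian.Ext X Y n where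
  toFun f := P.extMk f.1 (n + 1) rfl f.2
  map_add' _ _ := (P.add_extMk _ _ _ _ _ _).symm
  map_smul' r f := extMk_smul P r f.1 f.2

lemma surjective_extMkₗ (n : ℕ) : Function.Surjective (extMkₗ (R := R) (Y := Y) P n) := fun x ↦
  let ⟨f, hf, hx⟩ := P.extMk_surjective x (n + 1) rfl
  ⟨⟨f, hf⟩, hx⟩

variable (R) in
/-- The comparison of the two constructions of `Ext` modules in Mathlib: the left derived functors
of `Hom(-, Y)`, and the morphisms in the derived category. -/
noncomputable def extLinearEquiv [EnoughProjectives 𝒞] (X Y : 𝒞) (n : ℕ) :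
    ((Ext R 𝒞 n).obj (Opposite.op X)).obj Y ≃ₗ[R] Abelian.Ext X Y n :=
  let P := ProjectiveResolution.of X
  let K := P.complex.linearYonedaObj R Y
  let e : K.homology n ≅ (K.sc' _ n (n + 1)).homology :=
    K.homologyIsoSc' _ n (n + 1) rfl (CochainComplex.next ℕ n)
  (P.isoExt n Y ≪≫ e).toLinearEquiv.trans <|
    homologyLinearEquivOfSurjective _ (extMkₗ P n) (surjective_extMkₗ P n) fun f ↦
      extMk_eq_zero_iff_exists_d_prev_comp P f.1 f.2

end Comparison

section BaseChange

variable (R S : Type u) [CommRing R] [CommRing S] [Algebra R S] [Module.FaithfullyFlat R S]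

lemma shortExact_mk_one_rTensor_mkQ (M : Type u) [AddCommGroup M] [Module R M] :
    (ModuleCat.shortComplexOfCompEqZero (TensorProduct.mk R S M 1)
      ((LinearMap.range (Algebra.linearMap R S)).mkQ.rTensor M)
      (rTensor_mkQ_exact R S M).linearMap_comp_eq_zero).ShortExact :=
  ModuleCat.shortComplex_shortExact _ (rTensor_mkQ_exact R S M)
    (Module.FaithfullyFlat.tensorProduct_mk_injective M)
    (LinearMap.rTensor_surjective M (Submodule.mkQ_surjective _))

variable {R S} {M N : Type u} [AddCommGroup M] [Module R M] [AddCommGroup N] [Module R N]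

lemma nonempty_extModule_tensor_linearEquiv
    (h : ∀ j, IsExtOrthogonal (ModuleCat.of R (AlgebraCokernel R S)) (extModule R M N j)) (i : ℕ) :
    Nonempty (extModule R (S ⊗[R] M) N i ≃ₗ[R] extModule R M N i) := by
  have hC : IsExtOrthogonal (ModuleCat.of R (AlgebraCokernel R S ⊗[R] M)) (ModuleCat.of R N) :=
    isExtOrthogonal_tensor fun j ↦ (h j).of_iso (extLinearEquiv R _ _ j).toModuleIso
  have hbij : Function.Bijective ((Abelian.Ext.mk₀ (ModuleCat.ofHom (TensorProduct.mk R S M 1)))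
      |>.precompOfLinear R (ModuleCat.of R N) (zero_add i)) :=
    precomp_mk₀_bijective (shortExact_mk_one_rTensor_mkQ R S M) hC
  exact ⟨(extLinearEquiv R _ _ i).trans <|
    (LinearEquiv.ofBijective _ hbij).trans (extLinearEquiv R _ _ i).symm⟩

end BaseChange

theorem ext_baseChange_iso_of_hasCompatibleSModule_general
    (R S : Type u) [CommRing R] [CommRing S] [IsNoetherianRing S] [Algebra R S]
    [Module.FaithfullyFlat R S] (𝔞 : Ideal R)
    (h𝔞 : 𝔞.map (algebraMap R S) ≤ Ideal.jacobson ⊥)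
    (hsurj : Function.Surjective
      (Ideal.quotientMap (𝔞.map (algebraMap R S)) (algebraMap R S) Ideal.le_comap_map))
    (M N : Type u) [AddCommGroup M] [Module R M] [AddCommGroup N] [Module R N]
    (hfin : ∀ i, Module.Finite R (extModule R M N i))
    (h : ∀ i, HasCompatibleSModule R S (extModule R M N i)) (i : ℕ) :
    Nonempty (extModule R (S ⊗[R] M) N i ≅ extModule R M N i) ∧
      Module.Finite R (extModule R (S ⊗[R] M) N i) := by
  have hortho (j : ℕ) :
      IsExtOrthogonal (ModuleCat.of R (AlgebraCokernel R S)) (extModule R M N j) :=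
    isExtOrthogonal_of_subsingleton_tensor _ _ <| subsingleton_algebraCokernel_tensor <|
      surjective_mk_one_of_hasCompatibleSModule h𝔞 hsurj (h j)
  obtain ⟨e⟩ := nonempty_extModule_tensor_linearEquiv hortho i
  exact ⟨⟨e.toModuleIso⟩, Module.Finite.equiv e.symm⟩

lemma finite_extModule (R : Type u) [CommRing R] [IsNoetherianRing R] (M N : Type u)
    [AddCommGroup M] [Module R M] [Module.Finite R M] [AddCommGroup N] [Module R N]
    [Module.Finite R N] (i : ℕ) : Module.Finite R (extModule R M N i) :=
  Module.Finite.equiv (extLinearEquiv R (ModuleCat.of R M) (ModuleCat.of R N) i).symm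

/-- Let `φ : (R, m) → (S, n)` be a flat local homomorphism of commutative Noetherian local
rings such that `R/m → S/mS` is an isomorphism, and let `M`, `N` be finitely generated
`R`-modules. If `Ext^i_R(M, N)` has a compatible `S`-module structure for all `i ≥ 0`,
then for every `i ≥ 0` one has `Ext^i_R(S ⊗_R M, N) ≅ Ext^i_R(M, N)` as `R`-modules;
in particular `Ext^i_R(S ⊗_R M, N)` is finitely generated over `R`. -/
theorem ext_baseChange_iso_of_hasCompatibleSModule
    (R S : Type u) [CommRing R] [CommRing S] [IsLocalRing R] [IsLocalRing S]
    [IsNoetherianRing R] [IsNoetherianRing S] [Algebra R S] [Module.Flat R S]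
    [IsLocalHom (algebraMap R S)]
    (hres : Function.Bijective
      (Ideal.quotientMap ((IsLocalRing.maximalIdeal R).map (algebraMap R S)) (algebraMap R S)
        Ideal.le_comap_map))
    (M N : Type u) [AddCommGroup M] [Module R M] [Module.Finite R M]
    [AddCommGroup N] [Module R N] [Module.Finite R N]
    (h : ∀ i : ℕ, HasCompatibleSModule R S (extModule R M N i)) :
    ∀ i : ℕ, Nonempty (extModule R (S ⊗[R] M) N i ≅ extModule R M N i) ∧
      Module.Finite R (extModule R (S ⊗[R] M) N i) := by
  have : Module.FaithfullyFlat R S := Module.FaithfullyFlat.of_flat_of_isLocalHom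
  have hm : (IsLocalRing.maximalIdeal R).map (algebraMap R S) ≤ Ideal.jacobson ⊥ :=
    (IsLocalRing.map_maximalIdeal_le (algebraMap R S)).trans
      (IsLocalRing.maximalIdeal_le_jacobson ⊥)
  exact ext_baseChange_iso_of_hasCompatibleSModule_general R S _ hm hres.2 M N
    (finite_extModule R M N) h
end
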